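/- Let n ≥ 3 and let 𝒜 = {[A₁],…,[A_r]} be a malnormal subgroup system of F_n, with L, Γ_i, 𝒞 and S_k as in the context. Let k ≥ L+2 and let w ∈ S_k. Then there exist w' ∈ S_{k+1}, an index i ∈ {1,…,r}, an element g ∈ F_n and an element a ∈ gA_ig⁻¹ such that w' is a length-one extension of w and a is an extension of w'. -/

import Mathlib

/-!
Only the last window of `w` matters. Write `w = v u` with `|u| = L + 2`. Since `u ∉ 𝒞`, the
path of `u` lies in the tree of some conjugate `B` of some `A i`, so `w` lies on the axis of
`v b v⁻¹` for some nontrivial `b ∈ B`; equivalently, `c = u⁻¹ b u` is a shortest element of its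
conjugacy class, hence cyclically reduced. As `c` and `c⁻¹` start with different letters, one of
the two directions of the axis at `w` does not backtrack along `w` (`IsMin.exists_reduced`);
after replacing `b` by its inverse if needed, let `x` be the first letter of `c` and `w' = w x`.

* The axis continues through `w'` (`IsMin.rotate`), so the only new window of length `L + 2` of
  `w'` labels a path in the tree of a conjugate of `B`. Translating it to the base point shows
  that the window is not in `𝒞`.
* The power `(v b v⁻¹) ^ N = w c ^ N w⁻¹` has at most `|w|` letters cancelled at its end
  (`prefix_rword_mul`), so for `N = |w| + 2` it is an extension of `w x` (`extension_pow`).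
-/

open scoped Classical
open MeasureTheory

noncomputable section

namespace RelCurr

/-- The alphabet `𝔄 = ℬ ∪ ℬ⁻¹`: a letter is a generator together with a sign. -/
abbrev Letter (n : ℕ) := Fin n × Bool

/-- The inverse of a letter. -/
def linv {n : ℕ} (x : Letter n) : Letter n := (x.1, !x.2)

/-- The free group of rank `n` on the basis `Fin n`. -/
abbrev F (n : ℕ) := FreeGroup (Fin n)

/-- The reduced word of an element of `F n`. -/
def rword {n : ℕ} (g : F n) : List (Letter n) := FreeGroup.toWord g

/-- The length `|g|` of the reduced word of `g`. -/
def wlen {n : ℕ} (g : F n) : ℕ := (rword g).length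

/-- The single-letter element of `F n` given by a letter. -/
def letterE {n : ℕ} (b : Letter n) : F n := FreeGroup.mk [b]

/-- The conjugate subgroup `g A g⁻¹`. -/
def conjSub {n : ℕ} (g : F n) (A : Subgroup (F n)) : Subgroup (F n) :=
  Subgroup.map (MulAut.conj g).toMonoidHom A

/-- A subgroup `A` is malnormal if `xAx⁻¹ ∩ A = {1}` for every `x ∉ A`. -/
def Malnormal {n : ℕ} (A : Subgroup (F n)) : Prop :=
  ∀ x : F n, x ∉ A → conjSub x A ⊓ A = ⊥

/-- The word metric on the Cayley tree `T`. -/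
def dist' {n : ℕ} (x y : F n) : ℕ := wlen (x⁻¹ * y)

/-- The cyclically reduced length of `a`. -/
def cycLen {n : ℕ} (a : F n) : ℕ := sInf { m | ∃ h : F n, wlen (h⁻¹ * a * h) = m }

/-- The vertex set of the minimal `A`-invariant subtree `T_A` of the Cayley tree:
the union of the axes of the nontrivial elements of `A`. -/
def treeVerts {n : ℕ} (A : Subgroup (F n)) : Set (F n) :=
  { h | ∃ a ∈ A, a ≠ 1 ∧ wlen (h⁻¹ * a * h) = cycLen a }

/-- `γ_w ⊆ S`: every prefix of the reduced word of `w` lies in the vertex set `S`. -/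
def pathIn {n : ℕ} (w : F n) (S : Set (F n)) : Prop :=
  ∀ m ≤ wlen w, FreeGroup.mk ((rword w).take m) ∈ S

/-- An element is cyclically reduced if the last letter of its reduced word is not the
inverse of the first letter. -/
def CyclicallyReduced {n : ℕ} (w : F n) : Prop :=
  ∀ x y : Letter n, (rword w).head? = some x → (rword w).getLast? = some y → y ≠ linv x

/-- `v` is a length-one extension of `w`. -/
def LengthOneExt {n : ℕ} (w v : F n) : Prop :=
  ∃ b : Letter n, v = w * letterE b ∧ wlen v = wlen w + 1

/-- `a` is an extension of `w`: the reduced word of `w` is a proper prefix of that of `a`. -/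
def ExtensionOf {n : ℕ} (w a : F n) : Prop :=
  rword w <+: rword a ∧ wlen w < wlen a

/-- `g` is a proper power. -/
def IsProperPower {n : ℕ} (g : F n) : Prop := ∃ (h : F n) (k : ℕ), 2 ≤ k ∧ g = h ^ k

section System

variable {n r : ℕ} (A : Fin r → Subgroup (F n))

/-- `[B] ∈ 𝒜`, i.e. `B` is a conjugate of one of the subgroups of the system. -/
def InSystem (B : Subgroup (F n)) : Prop := ∃ (i : Fin r) (g : F n), B = conjSub g (A i)

/-- The family `A` represents a subgroup system: finite rank subgroups distinct
from `{1}` and `F n`. -/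
def IsSystem : Prop := (∀ i, (A i).FG) ∧ (∀ i, A i ≠ ⊥) ∧ (∀ i, A i ≠ ⊤)

/-- The subgroup system is malnormal. -/
def SystemMalnormal : Prop :=
  (∀ i, Malnormal (A i)) ∧
  ∀ B₁ B₂ : Subgroup (F n), InSystem A B₁ → InSystem A B₂ → B₁ ≠ B₂ → B₁ ⊓ B₂ = ⊥

/-- `g` is `𝒜`-peripheral: trivial or contained in a conjugate of one of the `A i`. -/
def Peripheral (g : F n) : Prop := g = 1 ∨ ∃ B, InSystem A B ∧ g ∈ B

/-- The diameter of the intersection of the trees of two distinct subgroups of the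
system is at most `L`. -/
def DiamBound (L : ℕ) : Prop :=
  ∀ B₁ B₂ : Subgroup (F n), InSystem A B₁ → InSystem A B₂ → B₁ ≠ B₂ →
    ∀ x ∈ treeVerts B₁ ∩ treeVerts B₂, ∀ y ∈ treeVerts B₁ ∩ treeVerts B₂, dist' x y ≤ L

/-- `B ∈ Γ_i`: `B` is a conjugate of `A i` whose tree contains the base point `1`. -/
def GammaMem (i : Fin r) (B : Subgroup (F n)) : Prop :=
  (∃ g : F n, B = conjSub g (A i)) ∧ (1 : F n) ∈ treeVerts B

/-- The finite set `𝒞` of words of length `L+2` whose path is contained in no tree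
`T_B` with `B ∈ Γ_i`, for every `i`. -/
def Ccal (L : ℕ) : Set (F n) :=
  { w | wlen w = L + 2 ∧ ∀ (i : Fin r) (B : Subgroup (F n)), GammaMem A i B →
      ¬ pathIn w (treeVerts B) }

/-- `F_n − 𝒜`: the words containing an element of `𝒞` as a contiguous subword. -/
def FmA (L : ℕ) : Set (F n) := { w | ∃ x ∈ Ccal A L, rword x <:+: rword w }

/-- `S_k`: words of length `k` not containing any element of `𝒞` as a subword. -/
def Sk (L k : ℕ) : Set (F n) := { w | wlen w = k ∧ w ∉ FmA A L }

end System

/-! ### The boundary of `F n` -/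

/-- An infinite reduced word. -/
def IsRed {n : ℕ} (ξ : ℕ → Letter n) : Prop := ∀ i, ξ (i + 1) ≠ linv (ξ i)

/-- The Gromov boundary `∂F_n`, realized as the space of infinite reduced words,
topologized as a subspace of the product space. -/
def Boundary (n : ℕ) : Type := { ξ : ℕ → Letter n // IsRed ξ }

instance {n : ℕ} : TopologicalSpace (Boundary n) :=
  instTopologicalSpaceSubtype

/-- The length-`m` prefix of a boundary point. -/
def bpre {n : ℕ} (ξ : Boundary n) (m : ℕ) : List (Letter n) :=
  (List.range m).map ξ.1

/-- The reduced word of `w` is a prefix of the infinite word `ξ`. -/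
def wordPrefixOf {n : ℕ} (w : F n) (ξ : Boundary n) : Prop :=
  bpre ξ (wlen w) = rword w

/-- The boundary (limit set) `∂A ⊆ ∂F_n` of a subgroup `A`. -/
def limitSet {n : ℕ} (A : Subgroup (F n)) : Set (Boundary n) :=
  { ξ | ∀ m : ℕ, ∃ a ∈ A, bpre ξ m <+: rword a }

/-- `ξ = g^{+∞}`: `ξ` is the limit of the reduced words of the powers of `g`. -/
def IsPosLimit {n : ℕ} (g : F n) (ξ : Boundary n) : Prop :=
  ∀ m : ℕ, ∃ N : ℕ, ∀ k ≥ N, bpre ξ m <+: rword (g ^ k)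

/-- The number of letters cancelled when concatenating the word `l` with the
infinite reduced word `ξ`. -/
def cancelLen {n : ℕ} (l : List (Letter n)) (ξ : ℕ → Letter n) : ℕ :=
  sSup { j | j ≤ l.length ∧ ∀ i < j, l.reverse[i]? = some (linv (ξ i)) }

/-- The sequence underlying the action of `g` on a boundary point: left multiplication
followed by cancellation. -/
def actSeq {n : ℕ} (g : F n) (ξ : ℕ → Letter n) : ℕ → Letter n :=
  fun m =>
    if h : m < (rword g).length - cancelLen (rword g) ξ then
      (rword g).get ⟨m, by omega⟩
    else ξ (m - ((rword g).length - cancelLen (rword g) ξ) + cancelLen (rword g) ξ)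

/-- The action of `F n` on its boundary: left multiplication followed by cancellation.
(The sequence `actSeq g ξ.1` is always reduced, so the first branch always applies.) -/
def bAct {n : ℕ} (g : F n) (ξ : Boundary n) : Boundary n :=
  if h : IsRed (actSeq g ξ.1) then ⟨actSeq g ξ.1, h⟩ else ξ

/-! ### The double boundary -/

/-- The diagonal action of `F n` on `Sym2 (∂F_n)`, whose restriction to the set of
non-diagonal classes is the action on the double boundary `∂²F_n`. -/
def dbAct {n : ℕ} (g : F n) : Sym2 (Boundary n) → Sym2 (Boundary n) := Sym2.map (bAct g)

/-- `∂²𝒜`: the classes `{ξ,η}` with both endpoints in `g·∂A_i = ∂(gA_ig⁻¹)` for some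
`i` and `g`. -/
def dblBndA {n r : ℕ} (A : Fin r → Subgroup (F n)) : Set (Sym2 (Boundary n)) :=
  { z | ∃ (i : Fin r) (g : F n) (ξ η : Boundary n), z = s(ξ, η) ∧
      ξ ∈ limitSet (conjSub g (A i)) ∧ η ∈ limitSet (conjSub g (A i)) }

/-- The double boundary `∂²(F_n,𝒜)` of `F n` relative to `𝒜`, as a subset of
`Sym2 (∂F_n)`: non-diagonal classes not lying in `∂²𝒜`. -/
def relSet {n r : ℕ} (A : Fin r → Subgroup (F n)) : Set (Sym2 (Boundary n)) :=
  { z | ¬ z.IsDiag } \ dblBndA A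

/-- The cylinder set `C(γ_w) ⊆ ∂²F_n` of the geodesic path from `1` to `w`. -/
def cylinder {n : ℕ} (w : F n) : Set (Sym2 (Boundary n)) :=
  { z | ∃ ξ η : Boundary n, z = s(ξ, η) ∧ ξ.1 0 ≠ η.1 0 ∧
      (wordPrefixOf w ξ ∨ wordPrefixOf w η) }

instance {n : ℕ} : MeasurableSpace (Sym2 (Boundary n)) := borel _

/-- The action of `g ∈ F n` on `∂²(F_n,𝒜)`. (The action of `F n` preserves
`∂²(F_n,𝒜)`, so the first branch always applies.) -/
def relAct {n r : ℕ} (A : Fin r → Subgroup (F n)) (g : F n) (z : ↥(relSet A)) :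
    ↥(relSet A) :=
  if h : dbAct g z.1 ∈ relSet A then ⟨dbAct g z.1, h⟩ else z

/-- The cylinder `C(γ_w)` as a subset of `∂²(F_n,𝒜)`. -/
def relCyl {n r : ℕ} (A : Fin r → Subgroup (F n)) (w : F n) : Set ↥(relSet A) :=
  Subtype.val ⁻¹' cylinder w

/-- The translated cylinder `g·C(γ_w)` as a subset of `∂²(F_n,𝒜)`. -/
def relCylG {n r : ℕ} (A : Fin r → Subgroup (F n)) (g w : F n) : Set ↥(relSet A) :=
  Subtype.val ⁻¹' (dbAct g '' cylinder w)

/-- A relative current on `(F_n,𝒜)`: an `F_n`-invariant Radon measure on the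
locally compact space `∂²(F_n,𝒜)` (finite on compacts, outer regular, inner regular
on open sets). -/
def IsRelCurrent {n r : ℕ} (A : Fin r → Subgroup (F n)) (μ : Measure ↥(relSet A)) : Prop :=
  (∀ (g : F n) (s : Set ↥(relSet A)), MeasurableSet s → μ (relAct A g ⁻¹' s) = μ s) ∧
  μ.Regular

/-- The `F_n`-orbit of a point of `Sym2 (∂F_n)`, inside `∂²(F_n,𝒜)`. -/
def orbitOf {n r : ℕ} (A : Fin r → Subgroup (F n)) (z : Sym2 (Boundary n)) :
    Set ↥(relSet A) :=
  { y | ∃ h : F n, (y : Sym2 (Boundary n)) = dbAct h z }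

/-! ### Words -/

theorem rword_mk {n : ℕ} {l : List (Letter n)} (h : FreeGroup.IsReduced l) :
    rword (FreeGroup.mk l : F n) = l := by
  rw [rword, FreeGroup.toWord_mk, h.reduce_eq]

theorem isReduced_rword {n : ℕ} (g : F n) : FreeGroup.IsReduced (rword g) :=
  FreeGroup.isReduced_toWord

theorem mk_rword {n : ℕ} (g : F n) : FreeGroup.mk (rword g) = g := FreeGroup.mk_toWord

theorem wlen_mk_le {n : ℕ} (l : List (Letter n)) : wlen (FreeGroup.mk l : F n) ≤ l.length :=
  FreeGroup.norm_mk_le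

theorem wlen_inv {n : ℕ} (g : F n) : wlen g⁻¹ = wlen g := FreeGroup.norm_inv_eq

theorem mk_cons {n : ℕ} (x : Letter n) (l : List (Letter n)) :
    (FreeGroup.mk (x :: l) : F n) = letterE x * FreeGroup.mk l := by
  rw [letterE, FreeGroup.mul_mk]; rfl

theorem mk_concat {n : ℕ} (l : List (Letter n)) (x : Letter n) :
    (FreeGroup.mk (l ++ [x]) : F n) = FreeGroup.mk l * letterE x := by
  rw [letterE, FreeGroup.mul_mk]

theorem letterE_linv {n : ℕ} (x : Letter n) : letterE (linv x) = (letterE x)⁻¹ := by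
  simp [letterE, linv, FreeGroup.inv_mk, FreeGroup.invRev]

/-- Right multiplication by a letter either appends it or deletes the last letter. -/
theorem rword_mul_letterE {n : ℕ} (g : F n) (b : Letter n) :
    rword (g * letterE b) = rword g ++ [b] ∨ rword g = rword (g * letterE b) ++ [linv b] := by
  rcases List.eq_nil_or_concat (rword g) with h | ⟨q, y, h⟩
  · left
    rw [h, ← mk_rword g, h, letterE, FreeGroup.mul_mk]
    exact rword_mk FreeGroup.IsReduced.singleton
  · rw [List.concat_eq_append] at h
    have hg := isReduced_rword g
    by_cases hy : y = linv b
    · right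
      subst hy
      have hq : FreeGroup.IsReduced q := by
        rw [h] at hg; exact hg.infix ⟨[], [linv b], by simp⟩
      have e : g * letterE b = FreeGroup.mk q := by
        rw [← mk_rword g, h, mk_concat, letterE_linv, inv_mul_cancel_right]
      rw [e, rword_mk hq, h]
    · left
      have : FreeGroup.IsReduced (rword g ++ [b]) := by
        refine List.isChain_append.2 ⟨hg, List.isChain_singleton b, ?_⟩
        intro a ha c hc
        rw [h] at ha
        simp only [List.getLast?_append, List.getLast?_singleton, Option.some_or,
          Option.mem_def, Option.some.injEq, List.head?_cons] at ha hc
        subst ha hc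
        intro h1
        by_contra h2
        exact hy (Prod.ext h1 (Bool.eq_not_of_ne h2))
      rw [← rword_mk this, mk_concat, mk_rword]

/-- Right multiplication by a word `l` cancels at most `l.length` letters. -/
theorem prefix_rword_mul {n : ℕ} (p l : List (Letter n)) (g : F n) (h : p <+: rword g)
    (hl : p.length + l.length ≤ wlen g) : p <+: rword (g * FreeGroup.mk l) := by
  induction l generalizing g with
  | nil => rw [← FreeGroup.one_eq_mk, mul_one]; exact h
  | cons b l ih =>
    rw [mk_cons, ← mul_assoc]
    rw [wlen, List.length_cons] at hl
    rcases rword_mul_letterE g b with e | e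
    · refine ih _ (e ▸ h.trans (List.prefix_append _ _)) ?_
      rw [wlen, e, List.length_append]; omega
    · rw [e] at h hl
      rw [List.length_append, List.length_singleton] at hl
      refine ih _ (List.prefix_of_prefix_length_le h (List.prefix_append _ _) (by omega)) ?_
      rw [wlen]; omega

/-! ### Elements of minimal length in their conjugacy class -/

/-- `c` is a shortest element of its conjugacy class. -/
def IsMin {n : ℕ} (c : F n) : Prop := ∀ h : F n, wlen c ≤ wlen (h⁻¹ * c * h)

theorem IsMin.inv {n : ℕ} {c : F n} (hc : IsMin c) : IsMin c⁻¹ := by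
  intro h
  have := hc h
  rwa [← wlen_inv c, ← wlen_inv (h⁻¹ * c * h), mul_inv_rev, mul_inv_rev, inv_inv,
    ← mul_assoc] at this

/-- A vertex `h` lies on the axis of `a` exactly when `h⁻¹ a h` is a shortest conjugate. -/
theorem mem_treeVerts_iff {n : ℕ} {B : Subgroup (F n)} {h : F n} :
    h ∈ treeVerts B ↔ ∃ a ∈ B, a ≠ 1 ∧ IsMin (h⁻¹ * a * h) := by
  refine exists_congr fun a => and_congr_right fun _ => and_congr_right fun _ => ?_
  constructor
  · intro e g
    rw [e]
    exact Nat.sInf_le ⟨h * g, by group⟩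
  · intro hm
    refine le_antisymm ?_ (Nat.sInf_le ⟨h, rfl⟩)
    have hne : { m | ∃ h : F n, wlen (h⁻¹ * a * h) = m }.Nonempty := ⟨_, h, rfl⟩
    obtain ⟨g, hg⟩ := Nat.sInf_mem hne
    rw [cycLen, ← hg]
    have e : g⁻¹ * a * g = (h⁻¹ * g)⁻¹ * (h⁻¹ * a * h) * (h⁻¹ * g) := by group
    rw [e]
    exact hm (h⁻¹ * g)

theorem mul_mem_treeVerts {n : ℕ} {B : Subgroup (F n)} {h : F n} (g : F n)
    (hh : h ∈ treeVerts B) : g * h ∈ treeVerts (conjSub g B) := by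
  obtain ⟨a, ha, h1, hm⟩ := mem_treeVerts_iff.1 hh
  refine mem_treeVerts_iff.2 ⟨g * a * g⁻¹, ⟨a, ha, by simp⟩, by simpa using h1, ?_⟩
  convert hm using 1
  group

theorem conjSub_conjSub {n : ℕ} (g h : F n) (A : Subgroup (F n)) :
    conjSub g (conjSub h A) = conjSub (g * h) A := by
  simp only [conjSub, Subgroup.map_map]
  congr 1
  ext x
  simp [mul_assoc]

/-- Rotating a shortest conjugate by its first letter gives a shortest conjugate: the axis
through a vertex continues along the first letter. -/
theorem IsMin.rotate {n : ℕ} {c : F n} (hc : IsMin c) {x : Letter n} {t : List (Letter n)}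
    (e : rword c = x :: t) : IsMin ((letterE x)⁻¹ * c * letterE x) := by
  intro h
  have h1 : wlen ((letterE x)⁻¹ * c * letterE x) ≤ wlen c := by
    have : (letterE x)⁻¹ * c * letterE x = FreeGroup.mk (t ++ [x]) := by
      rw [mk_concat, ← mk_rword c, e, mk_cons, inv_mul_cancel_left]
    rw [this]
    refine (wlen_mk_le _).trans ?_
    simp [wlen, e]
  refine h1.trans ?_
  have e' : h⁻¹ * ((letterE x)⁻¹ * c * letterE x) * h =
      (letterE x * h)⁻¹ * c * (letterE x * h) := by group
  rw [e']
  exact hc (letterE x * h)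

theorem IsMin.isCyclicallyReduced {n : ℕ} {c : F n} (hc : IsMin c) :
    FreeGroup.IsCyclicallyReduced (rword c) := by
  refine ⟨isReduced_rword c, ?_⟩
  intro z hz x hx h1
  by_contra h2
  have hzx : z = linv x := Prod.ext h1 (Bool.eq_not_of_ne h2)
  rcases e : rword c with _ | ⟨x', t⟩
  · simp [e] at hz
  rw [e] at hz hx
  obtain rfl : x' = x := by simpa using hx
  rcases List.eq_nil_or_concat t with ht | ⟨q, z', ht⟩
  · subst ht
    obtain rfl : x' = z := by simpa using hz
    exact h2 rfl
  · rw [List.concat_eq_append] at ht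
    subst ht
    have : z' = z := by
      rw [← List.cons_append, List.getLast?_concat] at hz
      simpa using hz
    subst this
    subst hzx
    -- conjugating by the first letter deletes both end letters
    have hs : (letterE x')⁻¹ * c * letterE x' = FreeGroup.mk q := by
      rw [← mk_rword c, e, mk_cons, inv_mul_cancel_left, mk_concat, letterE_linv,
        inv_mul_cancel_right]
    have h3 := hc (letterE x')
    rw [hs] at h3
    have h4 := wlen_mk_le q
    rw [wlen, e] at h3
    simp at h3
    omega

/-- Of the two directions of an axis at the vertex `w`, at least one does not backtrack
along `w`. -/
theorem IsMin.exists_reduced {n : ℕ} {c : F n} (hc : IsMin c) (w : F n) :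
    FreeGroup.IsReduced (rword w ++ rword c) ∨ FreeGroup.IsReduced (rword w ++ rword c⁻¹) := by
  by_contra! hcon
  obtain ⟨hA, hB⟩ := hcon
  apply hA
  refine List.isChain_append.2 ⟨isReduced_rword w, isReduced_rword c, ?_⟩
  intro y hy x hx h1
  by_contra h2
  apply hB
  refine List.isChain_append.2 ⟨isReduced_rword w, isReduced_rword c⁻¹, ?_⟩
  intro y' hy' z hz h3
  have hyy : y' = y := Option.mem_unique hy' hy
  subst hyy
  have hcr := hc.isCyclicallyReduced.2
  have hz' : (linv z) ∈ (rword c).getLast? := by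
    rw [rword, FreeGroup.toWord_inv, FreeGroup.invRev, List.head?_reverse,
      List.getLast?_map] at hz
    simp only [Option.mem_def, Option.map_eq_some_iff] at hz
    obtain ⟨a, ha, rfl⟩ := hz
    simpa [linv, rword] using ha
  have h4 := hcr _ hz' _ hx (by simp only [linv]; rw [← h3, h1])
  simp only [linv] at h4
  by_contra h5
  apply h2
  revert h4 h5
  cases x.2 <;> cases z.2 <;> cases y'.2 <;> simp

/-! ### Extending along an axis -/

theorem conj_pow_eq {n : ℕ} (b w : F n) (N : ℕ) :
    b ^ N = FreeGroup.mk (rword w ++ (List.replicate N (rword (w⁻¹ * b * w))).flatten) *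
      FreeGroup.mk (rword w⁻¹) := by
  have h : (FreeGroup.mk (List.replicate N (rword (w⁻¹ * b * w))).flatten : F n) =
      (w⁻¹ * b * w) ^ N := by
    rw [← FreeGroup.pow_mk, mk_rword]
  rw [← FreeGroup.mul_mk, h, mk_rword, mk_rword]
  have := conj_pow (a := w⁻¹) (b := b) (i := N)
  rw [inv_inv] at this
  rw [this]; group

/-- If `w` lies on the axis of `b` and the axis leaves `w` along the letter `x` without
backtracking, then high powers of `b` extend `w x`. -/
theorem extension_pow {n : ℕ} {b w : F n} (hc : IsMin (w⁻¹ * b * w)) {x : Letter n}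
    {t : List (Letter n)} (e : rword (w⁻¹ * b * w) = x :: t)
    (hr : FreeGroup.IsReduced (rword w ++ rword (w⁻¹ * b * w))) :
    rword (w * letterE x) = rword w ++ [x] ∧
      ExtensionOf (w * letterE x) (b ^ (wlen w + 2)) := by
  have hwx : FreeGroup.IsReduced (rword w ++ [x]) :=
    hr.infix ⟨[], t, by simp [e]⟩
  have hx : rword (w * letterE x) = rword w ++ [x] := by
    rw [← rword_mk hwx, mk_concat, mk_rword]
  refine ⟨hx, ?_⟩
  set W := rword w ++ (List.replicate (wlen w + 2) (rword (w⁻¹ * b * w))).flatten with hW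
  have hWr : FreeGroup.IsReduced W := by
    have := FreeGroup.IsReduced.append_flatten_replicate_append (L₃ := [])
      (n := wlen w + 2) hc.isCyclicallyReduced (by simpa using hr) (by omega)
    simpa [hW] using this
  have hWl : 2 * wlen w + 2 ≤ W.length := by
    have h1 : 1 ≤ (rword (w⁻¹ * b * w)).length := by simp [e]
    have h2 : W.length = wlen w + (wlen w + 2) * (rword (w⁻¹ * b * w)).length := by
      simp [hW, wlen]
    nlinarith
  have hp : W.take (wlen w + 2) <+: rword (b ^ (wlen w + 2)) := by
    rw [conj_pow_eq b w]
    refine prefix_rword_mul _ _ _ ?_ ?_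
    · rw [rword_mk hWr]; exact List.take_prefix _ _
    · have h3 : (rword w⁻¹).length = wlen w := wlen_inv w
      have h4 : wlen (FreeGroup.mk W : F n) = W.length := by rw [wlen, rword_mk hWr]
      rw [h4, List.length_take, h3]
      omega
  have hq : rword w ++ [x] <+: W := by
    rw [hW, List.replicate_succ, List.flatten_cons, e]
    exact ⟨t ++ (List.replicate (wlen w + 1) (x :: t)).flatten, by simp⟩
  have hlen : (W.take (wlen w + 2)).length = wlen w + 2 := by
    rw [List.length_take]; omega
  refine ⟨?_, ?_⟩
  · rw [hx]
    refine (List.prefix_of_prefix_length_le hq (List.take_prefix (wlen w + 2) W) ?_).trans hp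
    rw [hlen]; simp [wlen]
  · have := hp.length_le
    rw [hlen] at this
    rw [wlen, hx]
    simp only [wlen, List.length_append, List.length_singleton] at *
    omega

/-- Every element of S_k with k ≥ L+2 has a length-one extension in S_{k+1} which
extends to an element of a conjugate of some A_i. -/
theorem statement_13 (n r L : ℕ) (hn : 3 ≤ n) (A : Fin r → Subgroup (F n))
    (hsys : IsSystem A) (hmal : SystemMalnormal A) (hL : 1 ≤ L)
    (hdiam : DiamBound A L) (hbase : ∀ i, (1 : F n) ∈ treeVerts (A i))
    (k : ℕ) (hk : L + 2 ≤ k) (w : F n) (hw : w ∈ Sk A L k) :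
    ∃ (w' : F n) (i : Fin r) (g a : F n),
      w' ∈ Sk A L (k + 1) ∧ a ∈ conjSub g (A i) ∧
      LengthOneExt w w' ∧ ExtensionOf w' a := by
  obtain ⟨hwk, hwF⟩ := hw
  -- the last `L + 2` letters `U` of `w`, with the complementary prefix `V`
  set V := (rword w).take (k - (L + 2)) with hV
  set U := (rword w).drop (k - (L + 2)) with hU
  have hVU : V ++ U = rword w := List.take_append_drop _ _
  have hUl : U.length = L + 2 := by
    rw [hU, List.length_drop]; rw [wlen] at hwk; omega
  have hUr : rword (FreeGroup.mk U : F n) = U :=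
    rword_mk ((isReduced_rword w).infix ⟨V, [], by simp [hVU]⟩)
  have hwv : w = FreeGroup.mk V * FreeGroup.mk U := by
    rw [FreeGroup.mul_mk, hVU, mk_rword]
  have hUC : (FreeGroup.mk U : F n) ∉ Ccal A L := fun h =>
    hwF ⟨_, h, by rw [hUr]; exact ⟨V, [], by simp [hVU]⟩⟩
  obtain ⟨i, B, hB, hpath⟩ : ∃ (i : Fin r) (B : Subgroup (F n)), GammaMem A i B ∧
      pathIn (FreeGroup.mk U) (treeVerts B) := by
    by_contra! hcon
    exact hUC ⟨by rw [wlen, hUr, hUl], hcon⟩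
  rw [pathIn, wlen, hUr, hUl] at hpath
  obtain ⟨⟨g, hg⟩, -⟩ := hB
  obtain ⟨b₀, hb₀, hb₀1, hm₀⟩ : ∃ b ∈ B, b ≠ 1 ∧
      IsMin ((FreeGroup.mk U)⁻¹ * b * FreeGroup.mk U) := by
    have := hpath (L + 2) le_rfl
    rw [List.take_of_length_le hUl.le] at this
    exact mem_treeVerts_iff.1 this
  set v : F n := FreeGroup.mk V with hv
  set u : F n := FreeGroup.mk U with hu
  -- orient the axis so that it leaves `w` without backtracking
  obtain ⟨b, hb, hb1, hm, hr⟩ : ∃ b ∈ B, b ≠ 1 ∧ IsMin (u⁻¹ * b * u) ∧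
      FreeGroup.IsReduced (rword w ++ rword (u⁻¹ * b * u)) := by
    rcases hm₀.exists_reduced w with h | h
    · exact ⟨b₀, hb₀, hb₀1, hm₀, h⟩
    · have e : (u⁻¹ * b₀ * u)⁻¹ = u⁻¹ * b₀⁻¹ * u := by group
      exact ⟨b₀⁻¹, inv_mem hb₀, inv_ne_one.2 hb₀1, e ▸ hm₀.inv, e ▸ h⟩
  have hconj : w⁻¹ * (v * b * v⁻¹) * w = u⁻¹ * b * u := by rw [hwv]; group
  obtain ⟨x, t, hxt⟩ : ∃ x t, rword (u⁻¹ * b * u) = x :: t := by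
    refine List.exists_cons_of_ne_nil fun h => hb1 ?_
    have h1 : u⁻¹ * b * u = 1 := FreeGroup.toWord_eq_nil_iff.1 h
    have h2 : b = u * (u⁻¹ * b * u) * u⁻¹ := by group
    rw [h2, h1]; group
  obtain ⟨hw', hext⟩ := extension_pow (b := v * b * v⁻¹) (w := w) (x := x) (t := t)
    (by rwa [hconj]) (by rwa [hconj]) (by rwa [hconj])
  have hw'l : wlen (w * letterE x) = wlen w + 1 := by simp [wlen, hw']
  refine ⟨w * letterE x, i, v * g, (v * b * v⁻¹) ^ (wlen w + 2), ⟨by rw [hw'l, hwk], ?_⟩, ?_,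
    ⟨x, rfl, hw'l⟩, hext⟩
  · rintro ⟨z, hz, hzw⟩
    rw [hw', List.infix_concat_iff] at hzw
    rcases hzw with hsuf | hinf
    · -- the only new window of length `L + 2` is the last one, `s ++ [x]` with `U = y :: s`
      obtain ⟨y, s, hys⟩ : ∃ y s, U = y :: s :=
        List.exists_cons_of_ne_nil fun h => by simp [h] at hUl
      have hsl : s.length = L + 1 := by simpa [hys] using hUl
      have hzl : (rword z).length = L + 2 := hz.1
      have hzs : rword z = s ++ [x] := by
        have h1 : s ++ [x] <:+ rword w ++ [x] := ⟨V ++ [y], by simp [← hVU, hys]⟩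
        exact (List.suffix_of_suffix_length_le hsuf h1 (by simp [hzl, hsl])).eq_of_length
          (by simp [hzl, hsl])
      have hmem : ∀ m ≤ L + 2, FreeGroup.mk ((rword z).take m) ∈
          treeVerts (conjSub (letterE y)⁻¹ B) := by
        intro m hmL
        rcases Nat.lt_or_ge m (L + 2) with hlt | hge
        · have h1 := mul_mem_treeVerts (letterE y)⁻¹ (hpath (m + 1) hlt)
          rw [hys, List.take_succ_cons, mk_cons, inv_mul_cancel_left] at h1
          rwa [hzs, List.take_append_of_le_length (by omega)]
        · have h1 : u * letterE x ∈ treeVerts B := by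
            refine mem_treeVerts_iff.2 ⟨b, hb, hb1, ?_⟩
            convert hm.rotate hxt using 1
            group
          have h2 := mul_mem_treeVerts (letterE y)⁻¹ h1
          rw [hu, hys, mk_cons, mul_assoc, inv_mul_cancel_left, ← mk_concat] at h2
          rwa [List.take_of_length_le (by omega), hzs]
      refine hz.2 i (conjSub (letterE y)⁻¹ B) ⟨⟨(letterE y)⁻¹ * g, ?_⟩, ?_⟩ ?_
      · rw [hg, conjSub_conjSub]
      · simpa [← FreeGroup.one_eq_mk] using hmem 0 (Nat.zero_le _)
      · intro m hmz
        exact hmem m (hz.1 ▸ hmz)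
    · exact hwF ⟨z, hz, hinf⟩
  · rw [← conjSub_conjSub, ← hg]
    have hvb : v * b * v⁻¹ ∈ conjSub v B := ⟨b, hb, by simp⟩
    exact pow_mem hvb _

end RelCurr
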